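/- Let b_0, b_1 : ℕ → ℕ → ℕ → Bool be computable functions such that for every n, (for every x there exists y with b_0(n,x,y) = true) or (for every x there exists y with b_1(n,x,y) = true). Then there exists a computable H : ℕ → ℕ → Bool such that, writing h_k := H(k,·) : ℕ → Bool, for every cluster point h : ℕ → Bool of the sequence (h_k) in Cantor space (meaning: for every n and every s there exists k ≥ s with h_k(i) = h(i) for all i ≤ n) and every n: if it is not the case that for every x there exists y with b_0(n,x,y) = true, then h(n) = true; and if it is not the case that for every x there exists y with b_1(n,x,y) = true, then h(n) = false. -/

import Mathlib

/-- Search state `(x, y)` for `b n` after `k` steps: look for a witness `y` for `x`, then move on. -/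
def srch (b : ℕ → ℕ → ℕ → Bool) (n k : ℕ) : ℕ × ℕ :=
  Nat.rec (0, 0) (fun _ p => bif b n p.1 p.2 then (p.1 + 1, 0) else (p.1, p.2 + 1)) k

theorem srch_succ (b : ℕ → ℕ → ℕ → Bool) (n k : ℕ) :
    srch b n (k + 1) = bif b n (srch b n k).1 (srch b n k).2 then ((srch b n k).1 + 1, 0)
      else ((srch b n k).1, (srch b n k).2 + 1) := rfl

theorem srch_step_computable (b : ℕ → ℕ → ℕ → Bool)
    (hb : Computable fun p : ℕ × ℕ × ℕ => b p.1 p.2.1 p.2.2) :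
    Computable fun z : (ℕ × ℕ) × ℕ × ℕ × ℕ =>
      (bif b z.1.2 z.2.2.1 z.2.2.2 then (z.2.2.1 + 1, 0) else (z.2.2.1, z.2.2.2 + 1) : ℕ × ℕ) := by
  have hp : Computable fun z : (ℕ × ℕ) × ℕ × ℕ × ℕ => z.2.2 :=
    Computable.snd.comp Computable.snd
  have h1 : Computable fun z : (ℕ × ℕ) × ℕ × ℕ × ℕ => z.2.2.1 := Computable.fst.comp hp
  have h2 : Computable fun z : (ℕ × ℕ) × ℕ × ℕ × ℕ => z.2.2.2 := Computable.snd.comp hp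
  have hn : Computable fun z : (ℕ × ℕ) × ℕ × ℕ × ℕ => z.1.2 :=
    Computable.snd.comp Computable.fst
  have hc : Computable fun z : (ℕ × ℕ) × ℕ × ℕ × ℕ => b z.1.2 z.2.2.1 z.2.2.2 :=
    Computable.comp (f := fun p : ℕ × ℕ × ℕ => b p.1 p.2.1 p.2.2)
      (g := fun z : (ℕ × ℕ) × ℕ × ℕ × ℕ => (z.1.2, z.2.2)) hb (Computable.pair hn hp)
  have ht : Computable fun z : (ℕ × ℕ) × ℕ × ℕ × ℕ => ((z.2.2.1 + 1, 0) : ℕ × ℕ) :=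
    (Computable.succ.comp h1).pair (Computable.const 0)
  have he : Computable fun z : (ℕ × ℕ) × ℕ × ℕ × ℕ => ((z.2.2.1, z.2.2.2 + 1) : ℕ × ℕ) :=
    h1.pair (Computable.succ.comp h2)
  exact Computable.cond hc ht he

theorem srch_computable (b : ℕ → ℕ → ℕ → Bool)
    (hb : Computable fun p : ℕ × ℕ × ℕ => b p.1 p.2.1 p.2.2) :
    Computable fun q : ℕ × ℕ => (srch b q.2 q.1).1 := by
  have hstep : Computable₂ fun (q : ℕ × ℕ) (r : ℕ × ℕ × ℕ) =>
      (bif b q.2 r.2.1 r.2.2 then (r.2.1 + 1, 0) else (r.2.1, r.2.2 + 1) : ℕ × ℕ) :=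
    srch_step_computable b hb
  have hrec := Computable.nat_rec (f := fun q : ℕ × ℕ => q.1)
    (g := fun _ : ℕ × ℕ => ((0, 0) : ℕ × ℕ)) Computable.fst (Computable.const _) hstep
  have hs : Computable fun q : ℕ × ℕ => srch b q.2 q.1 := hrec
  exact Computable.fst.comp hs

theorem srch_mono (b : ℕ → ℕ → ℕ → Bool) (n : ℕ) : Monotone fun k => (srch b n k).1 := by
  refine monotone_nat_of_le_succ fun k => ?_
  simp only [srch_succ]
  cases b n (srch b n k).1 (srch b n k).2 <;> simp

theorem srch_bdd (b : ℕ → ℕ → ℕ → Bool) (n x : ℕ) (hx : ∀ y, b n x y = false) (k : ℕ) :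
    (srch b n k).1 ≤ x := by
  induction k with
  | zero => exact Nat.zero_le _
  | succ k ih =>
    rw [srch_succ]
    rcases ih.eq_or_lt with h | h
    · simp [h, hx]
    · cases b n (srch b n k).1 (srch b n k).2 <;> simp <;> omega

theorem srch_unbdd (b : ℕ → ℕ → ℕ → Bool) (n : ℕ) (hx : ∀ x, ∃ y, b n x y = true) (x : ℕ) :
    ∃ k, srch b n k = (x, 0) := by
  induction x with
  | zero => exact ⟨0, rfl⟩
  | succ x ih =>
    obtain ⟨k, hk⟩ := ih
    have key : ∀ j, j ≤ Nat.find (hx x) → srch b n (k + j) = (x, j) := by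
      intro j
      induction j with
      | zero => intro _; exact hk
      | succ j ih =>
        intro hj
        have := Nat.find_min (hx x) (m := j) (by omega)
        rw [← add_assoc, srch_succ, ih (by omega)]
        simp [this]
    refine ⟨k + Nat.find (hx x) + 1, ?_⟩
    rw [srch_succ, key _ le_rfl]
    simp [Nat.find_spec (hx x)]

/-- If the search for `c` is stuck and that for `d` is not, the latter eventually overtakes. -/
theorem srch_lt (c d : ℕ → ℕ → ℕ → Bool) (n : ℕ) (hc : ¬ ∀ x, ∃ y, c n x y = true)
    (hd : ∀ x, ∃ y, d n x y = true) : ∃ s, ∀ k ≥ s, (srch c n k).1 < (srch d n k).1 := by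
  push Not at hc
  obtain ⟨x, hx⟩ := hc
  obtain ⟨s, hs⟩ := srch_unbdd d n hd (x + 1)
  refine ⟨s, fun k hk => ?_⟩
  have h1 := srch_bdd c n x (fun y => by simpa using hx y) k
  have h2 : (srch d n s).1 ≤ (srch d n k).1 := srch_mono d n hk
  rw [hs] at h2
  exact lt_of_le_of_lt h1 h2

/-- Computable, instance-wise form of the implication from Bolzano-Weierstraß
to Σ⁰₂-separation: from computable `b₀, b₁` such that for every `n` at least
one of the Π⁰₂ statements `∀x ∃y, bᵢ(n,x,y)` holds, one computes a sequence
`(h_k)` in Cantor space such that every cluster point `h` of `(h_k)` separates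
the Σ⁰₂ sets `{n | ¬∀x ∃y, b₀(n,x,y)}` and `{n | ¬∀x ∃y, b₁(n,x,y)}`. -/
theorem bw_implies_sigma02_separation (b₀ b₁ : ℕ → ℕ → ℕ → Bool)
    (hb₀ : Computable fun p : ℕ × ℕ × ℕ => b₀ p.1 p.2.1 p.2.2)
    (hb₁ : Computable fun p : ℕ × ℕ × ℕ => b₁ p.1 p.2.1 p.2.2)
    (hdisj : ∀ n : ℕ, (∀ x : ℕ, ∃ y : ℕ, b₀ n x y = true) ∨
      (∀ x : ℕ, ∃ y : ℕ, b₁ n x y = true)) :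
    ∃ H : ℕ → ℕ → Bool, Computable₂ H ∧
      ∀ h : ℕ → Bool,
        (∀ n : ℕ, ∀ s : ℕ, ∃ k ≥ s, ∀ i ≤ n, H k i = h i) →
        ∀ n : ℕ,
          (¬ (∀ x : ℕ, ∃ y : ℕ, b₀ n x y = true) → h n = true) ∧
          (¬ (∀ x : ℕ, ∃ y : ℕ, b₁ n x y = true) → h n = false) := by
  refine ⟨fun k n => decide ((srch b₀ n k).1 < (srch b₁ n k).1), ?_, ?_⟩
  · have hlt : Computable fun p : ℕ × ℕ => decide (p.1 < p.2) :=
      (PrimrecRel.decide Primrec.nat_lt).to_comp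
    exact hlt.comp ((srch_computable b₀ hb₀).pair (srch_computable b₁ hb₁))
  · intro h hh n
    constructor
    · intro hc
      obtain ⟨s, hs⟩ := srch_lt b₀ b₁ n hc ((hdisj n).resolve_left hc)
      obtain ⟨k, hk, he⟩ := hh n s
      rw [← he n le_rfl]
      simpa using hs k hk
    · intro hc
      obtain ⟨s, hs⟩ := srch_lt b₁ b₀ n hc ((hdisj n).resolve_right hc)
      obtain ⟨k, hk, he⟩ := hh n s
      rw [← he n le_rfl]
      simpa using (hs k hk).le
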